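/- arXiv:2103.08361 — 2 statements merged into one kernel-verified Lean document; each statement's English description precedes it below -/
import Mathlib

section
/- Let V be a finite set and let p : V → ℝ satisfy 0 ≤ p(v) ≤ p̂ for every v ∈ V, where p̂ is a real number with 0 ≤ p̂ < 1. Set P = Σ_{v∈V} p(v). Then Σ_{v∈V} p(v) · ∏_{w∈V, w≠v} (1 − p(w)) ≥ P · exp(−P/(1 − p̂)). -/
open Finset Real

theorem stmt_0 {α : Type*} [DecidableEq α] (V : Finset α) (p : α → ℝ) (phat : ℝ)
    (hphat0 : 0 ≤ phat) (hphat1 : phat < 1)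
    (hp0 : ∀ v ∈ V, 0 ≤ p v) (hp1 : ∀ v ∈ V, p v ≤ phat) :
    (∑ v ∈ V, p v) * Real.exp (-(∑ v ∈ V, p v) / (1 - phat)) ≤
      ∑ v ∈ V, p v * ∏ w ∈ V.erase v, (1 - p w) := by
  have hq : 0 < 1 - phat := by linarith
  have key : ∀ v ∈ V, Real.exp (-(p v) / (1 - phat)) ≤ 1 - p v := by
    intro v hv
    have h0 := hp0 v hv
    have h1 := hp1 v hv
    rw [neg_div, Real.exp_neg]
    apply inv_le_of_inv_le₀ (by linarith)
    refine le_trans ?_ (Real.add_one_le_exp _)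
    have hx : 0 ≤ p v / (1 - phat) := div_nonneg h0 hq.le
    have hxe : p v / (1 - phat) * (1 - phat) = p v := div_mul_cancel₀ _ hq.ne'
    rw [inv_le_iff_one_le_mul₀ (by linarith)]
    nlinarith [mul_nonneg hx (sub_nonneg.mpr h1)]
  have hprod : Real.exp (-(∑ v ∈ V, p v) / (1 - phat)) ≤ ∏ w ∈ V, (1 - p w) := by
    rw [← Finset.sum_neg_distrib, Finset.sum_div, Real.exp_sum]
    exact Finset.prod_le_prod (fun _ _ => (Real.exp_pos _).le) key
  rw [Finset.sum_mul]
  refine Finset.sum_le_sum fun v hv => mul_le_mul_of_nonneg_left (hprod.trans ?_) (hp0 v hv)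
  rw [← Finset.mul_prod_erase V _ hv]
  refine mul_le_of_le_one_left (Finset.prod_nonneg fun w hw => ?_) (by linarith [hp0 v hv])
  linarith [hp1 w (Finset.mem_of_mem_erase hw)]
end

section
/- For every real γ with 0 < γ ≤ 1/2 and all reals q₀, q₁ ≥ 0 satisfying q₁ ≥ 5·q₀, one has q₀·(1+γ) + q₁·(1+γ)^{−1} ≤ (q₀ + q₁)·(1+γ)^{−1/2}. -/
theorem stmt_4 (γ q₀ q₁ : ℝ) (hγ0 : 0 < γ) (hγ : γ ≤ 1/2)
    (hq₀ : 0 ≤ q₀) (hq₁ : 0 ≤ q₁) (h : 5 * q₀ ≤ q₁) :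
    q₀ * (1 + γ) + q₁ * (1 + γ)⁻¹ ≤ (q₀ + q₁) * (1 + γ) ^ (-(1:ℝ)/2) := by
  have hp : (1 + γ) ^ (-(1:ℝ)/2) = (Real.sqrt (1 + γ))⁻¹ := by
    rw [Real.sqrt_eq_rpow, ← Real.rpow_neg (by linarith)]
    norm_num
  rw [hp]
  have hs2 : Real.sqrt (1 + γ) ^ 2 = 1 + γ := Real.sq_sqrt (by linarith)
  have hs0 : 0 ≤ Real.sqrt (1 + γ) := Real.sqrt_nonneg _
  rw [← hs2, Real.sqrt_sq hs0]
  generalize Real.sqrt (1 + γ) = s at *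
  have h1 : 1 < s := by nlinarith
  have h2 : s ≤ 5 / 4 := by nlinarith
  have hb : s * (s ^ 2 + s + 1) ≤ 5 := by nlinarith
  have hm : q₀ * (s * (s ^ 2 + s + 1)) ≤ q₁ := by nlinarith
  have hf : (q₀ + q₁) * s⁻¹ - (q₀ * s ^ 2 + q₁ * (s ^ 2)⁻¹)
      = (s - 1) * (q₁ - q₀ * (s * (s ^ 2 + s + 1))) / s ^ 2 := by
    have : s ≠ 0 := by linarith
    field_simp
    ring
  have : 0 ≤ (s - 1) * (q₁ - q₀ * (s * (s ^ 2 + s + 1))) / s ^ 2 :=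
    div_nonneg (mul_nonneg (by linarith) (by linarith)) (by positivity)
  linarith
end
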